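/- Let F be a field, let n and f be natural numbers, let A be an n×n matrix over F, and let U and V be n×f matrices over F. Assume det(A) ≠ 0 and det(A + U·Vᵀ) ≠ 0. Define the f×f matrix M := det(A)·I_f + Vᵀ·adj(A)·U. Then det(A)^f · adj(A + U·Vᵀ) = det(M) · adj(A) − adj(A)·U·adj(M)·Vᵀ·adj(A). -/

import Mathlib

/-!
Write `B = A + U * Vᵀ`. Since `B` is invertible, it suffices to compare both sides after right
multiplication by `B`. On the left this gives the scalar matrix `det A ^ f * det B`. On the right,
expanding and collecting `adj M * (det A • 1 + Vᵀ * adj A * U) = det M • 1` makes every term but the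
scalar matrix `det M * det A` cancel. The two scalars agree by the matrix determinant lemma,
because `M = det A • (1 + Vᵀ * A⁻¹ * U)`.
-/

open Matrix

/-- The matrix determinant lemma with denominators cleared. -/
theorem det_pow_mul_det_add {F : Type*} [Field F] {n f : ℕ}
    (A : Matrix (Fin n) (Fin n) F) (U V : Matrix (Fin n) (Fin f) F) (hA : A.det ≠ 0) :
    A.det ^ f * (A + U * Vᵀ).det =
      (A.det • (1 : Matrix (Fin f) (Fin f) F) + Vᵀ * A.adjugate * U).det * A.det := by
  have hadj : A.adjugate = A.det • A⁻¹ := by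
    rw [inv_def, Ring.inverse_eq_inv', smul_smul, mul_inv_cancel₀ hA, one_smul]
  rw [det_add_mul U Vᵀ (isUnit_iff_ne_zero.mpr hA), hadj, Matrix.mul_smul, Matrix.smul_mul,
    ← smul_add, det_smul, Fintype.card_fin]
  ring

theorem stmt_0 {F : Type*} [Field F] {n f : ℕ}
    (A : Matrix (Fin n) (Fin n) F) (U V : Matrix (Fin n) (Fin f) F)
    (hA : A.det ≠ 0) (hAUV : (A + U * Vᵀ).det ≠ 0)
    (M : Matrix (Fin f) (Fin f) F)
    (hM : M = A.det • (1 : Matrix (Fin f) (Fin f) F) + Vᵀ * A.adjugate * U) :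
    A.det ^ f • (A + U * Vᵀ).adjugate =
      M.det • A.adjugate - A.adjugate * U * M.adjugate * Vᵀ * A.adjugate := by
  have hB : IsUnit (A + U * Vᵀ) :=
    (isUnit_iff_isUnit_det _).mpr (isUnit_iff_ne_zero.mpr hAUV)
  have hV : Vᵀ * A.adjugate * (A + U * Vᵀ) = M * Vᵀ := by
    rw [hM, Matrix.mul_add, Matrix.add_mul, Matrix.mul_assoc Vᵀ _ A, adjugate_mul]
    simp [Matrix.mul_assoc]
  have hR : A.adjugate * U * M.adjugate * Vᵀ * A.adjugate * (A + U * Vᵀ) =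
      M.det • (A.adjugate * (U * Vᵀ)) := by
    calc _ = A.adjugate * U * M.adjugate * (Vᵀ * A.adjugate * (A + U * Vᵀ)) := by
          simp only [Matrix.mul_assoc]
      _ = A.adjugate * U * (M.adjugate * M) * Vᵀ := by
          rw [hV]
          simp only [Matrix.mul_assoc]
      _ = _ := by
          rw [adjugate_mul]
          simp [Matrix.mul_assoc]
  apply hB.mul_right_cancel
  rw [Matrix.sub_mul, hR, Matrix.smul_mul, Matrix.smul_mul, adjugate_mul, Matrix.mul_add,
    adjugate_mul, smul_add, add_sub_cancel_right, smul_smul, smul_smul,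
    det_pow_mul_det_add A U V hA, hM]
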